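/- Fix λ ∈ ℝ and define, for X ∈ (0, A), q(X) = i·c'(h(X))/a(h(X))² + (c(h(X)) − λ)²/a(h(X))² − i·(c(h(X)) − λ)·a'(h(X))/a(h(X))³ − b(h(X))²/a(h(X))², where primes denote derivatives with respect to x. Set ω_- = (c_- − λ)²/κ_-² − i·(c_- − λ)/κ_- and ω_+ = (c_+ − λ)²/κ_+² − i·(c_+ − λ)/κ_+. Then the function X ↦ q(X) − ω_- /X² is bounded on some interval (0, δ) with δ > 0, and the function X ↦ q(X) − ω_+/(A − X)² is bounded on some interval (A − δ', A) with δ' > 0. -/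

import Mathlib

open Filter MeasureTheory
open Asymptotics Topology Set

/-!
At a horizon `p` every coefficient is a differentiable function of `r`, and
`r - p = O(F(r)) = O(a²)` because `p` is a simple zero of `F`. Since `r' = F(r)`, the logarithmic
derivative of `a = √F / r` is `F'(r) / 2 - F(r) / r = κ + O(a²)`. With `X` the integral of `a` from
that end, `(a - κ X)' = O(a³)`, which is comparable to `(a³)'`; hence `a = κ X + O(a³)` and
`1 / a² = 1 / (κ X)² + O(1)`. The potential is `N / a²` with `N = N₀ + O(a²)`, so it equals
`(N₀ / κ²) / X² + O(1)`, and `N₀ / κ² = ω`. That the inverse of the Regge–Wheeler coordinate solves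
`r' = F(r)` is the partial fraction decomposition of `1 / F`.
-/

section PartialFractions

open Polynomial

variable {K : Type*} [Field K] {P f : K[X]} {s : Finset K}

theorem eq_C_leadingCoeff_mul_nodal (hroot : ∀ a ∈ s, P.eval a = 0) (hcard : P.natDegree = s.card) :
    P = C P.leadingCoeff * Lagrange.nodal s id := by
  rcases eq_or_ne P 0 with rfl | hP
  · simp
  have hroots : P.roots = s.val := roots_eq_of_natDegree_le_card_of_ne_zero hroot hcard.le hP
  have h := C_leadingCoeff_mul_prod_multiset_X_sub_C (p := P) (by rw [hroots, hcard]; rfl)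
  rw [hroots] at h
  exact h.symm

theorem eval_div_eval_eq_sum_div_derivative (hroot : ∀ a ∈ s, P.eval a = 0)
    (hcard : P.natDegree = s.card) (hf : f.degree < s.card) {x : K} (hx : x ∉ s) :
    f.eval x / P.eval x = ∑ a ∈ s, f.eval a / P.derivative.eval a * (x - a)⁻¹ := by
  classical
  have hfac := eq_C_leadingCoeff_mul_nodal hroot hcard
  have hne : ∀ a ∈ s, x ≠ id a := fun a ha => (ne_of_mem_of_not_mem ha hx).symm
  have hnodal := Lagrange.eval_nodal_not_at_node hne
  have hinterp := Lagrange.eval_interpolate_not_at_node (fun a => f.eval (id a)) hne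
  rw [← Lagrange.eq_interpolate (Function.injective_id.injOn) hf] at hinterp
  have hP' : ∀ a ∈ s, P.derivative.eval a = P.leadingCoeff * (Lagrange.nodalWeight s id a)⁻¹ := by
    intro a ha
    conv_lhs => rw [hfac]
    simp [Lagrange.nodalWeight_eq_eval_derivative_nodal ha]
  have hPx : P.eval x = P.leadingCoeff * (Lagrange.nodal s id).eval x := by
    conv_lhs => rw [hfac]
    simp
  rw [hPx, hinterp, mul_comm P.leadingCoeff, mul_div_mul_left _ _ hnodal, Finset.sum_div]
  refine Finset.sum_congr rfl fun a ha => ?_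
  rw [hP' a ha]
  simp only [id, div_eq_mul_inv, mul_inv, inv_inv]
  ring

theorem hasDerivAt_sum_log_sub {P f : ℝ[X]} {s : Finset ℝ}
    (hroot : ∀ a ∈ s, P.eval a = 0) (hcard : P.natDegree = s.card) (hf : f.degree < s.card)
    {x : ℝ} (hx : x ∉ s) :
    HasDerivAt (fun y => ∑ a ∈ s, f.eval a / P.derivative.eval a * Real.log (y - a))
      (f.eval x / P.eval x) x := by
  rw [eval_div_eval_eq_sum_div_derivative hroot hcard hf hx]
  refine HasDerivAt.fun_sum fun a ha => ?_
  have hxa : x - a ≠ 0 := sub_ne_zero.2 (ne_of_mem_of_not_mem ha hx).symm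
  simpa using (((hasDerivAt_id x).sub_const a).log hxa).const_mul _

end PartialFractions

section RightInverse

variable {α β : ℝ} {x r : ℝ → ℝ}

theorem strictMono_of_strictMonoOn_rightInverse (hx : StrictMonoOn x (Ioo α β))
    (hmem : ∀ s, r s ∈ Ioo α β) (hinv : ∀ s, x (r s) = s) : StrictMono r := fun s t hst => by
  rwa [← hx.lt_iff_lt (hmem s) (hmem t), hinv, hinv]

theorem range_eq_of_strictMonoOn_rightInverse (hx : StrictMonoOn x (Ioo α β))
    (hmem : ∀ s, r s ∈ Ioo α β) (hinv : ∀ s, x (r s) = s) : range r = Ioo α β :=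
  (range_subset_iff.2 hmem).antisymm fun y hy => ⟨x y, hx.injOn (hmem _) hy (hinv _)⟩

theorem tendsto_atBot_of_range_eq_Ioo (hr : Monotone r) (hrange : range r = Ioo α β) :
    Tendsto r atBot (𝓝 α) := by
  have hαβ : (Ioo α β).Nonempty := hrange ▸ range_nonempty r
  exact tendsto_atBot_isGLB hr (hrange ▸ isGLB_Ioo (nonempty_Ioo.1 hαβ))

theorem tendsto_atTop_of_range_eq_Ioo (hr : Monotone r) (hrange : range r = Ioo α β) :
    Tendsto r atTop (𝓝 β) := by
  have hαβ : (Ioo α β).Nonempty := hrange ▸ range_nonempty r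
  exact tendsto_atTop_isLUB hr (hrange ▸ isLUB_Ioo (nonempty_Ioo.1 hαβ))

theorem strictMonoOn_Ioo_of_hasDerivAt_inv {F : ℝ → ℝ} (hF : ∀ y ∈ Ioo α β, 0 < F y)
    (hx : ∀ y ∈ Ioo α β, HasDerivAt x (F y)⁻¹ y) : StrictMonoOn x (Ioo α β) := by
  refine strictMonoOn_of_deriv_pos (convex_Ioo α β)
    (fun y hy => (hx y hy).continuousAt.continuousWithinAt) fun y hy => ?_
  rw [interior_Ioo] at hy
  rw [(hx y hy).deriv]
  exact inv_pos.2 (hF y hy)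

theorem hasDerivAt_rightInverse_of_hasDerivAt_inv {F : ℝ → ℝ} (hF : ∀ y ∈ Ioo α β, 0 < F y)
    (hx : ∀ y ∈ Ioo α β, HasDerivAt x (F y)⁻¹ y) (hmem : ∀ s, r s ∈ Ioo α β)
    (hinv : ∀ s, x (r s) = s) (s : ℝ) : HasDerivAt r (F (r s)) s := by
  have hmono := strictMonoOn_Ioo_of_hasDerivAt_inv hF hx
  have hcont : Continuous r :=
    ((strictMono_of_strictMonoOn_rightInverse hmono hmem hinv).isEmbedding_of_ordConnected
      (range_eq_of_strictMonoOn_rightInverse hmono hmem hinv ▸ ordConnected_Ioo)).continuous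
  simpa using HasDerivAt.of_local_left_inverse hcont.continuousAt (hx _ (hmem s))
    (inv_pos.2 (hF _ (hmem s))).ne' (Eventually.of_forall hinv)

end RightInverse

section IntegralIic

theorem mem_Ioo_of_strictMono_of_tendsto {g : ℝ → ℝ} {α β : ℝ} (hg : StrictMono g)
    (hbot : Tendsto g atBot (𝓝 α)) (htop : Tendsto g atTop (𝓝 β)) (s : ℝ) : g s ∈ Ioo α β :=
  ⟨(hg.monotone.le_of_tendsto hbot (s - 1)).trans_lt (hg (sub_one_lt s)),
    (hg (lt_add_one s)).trans_le (hg.monotone.ge_of_tendsto htop (s + 1))⟩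

variable {a : ℝ → ℝ}

theorem hasDerivAt_integral_Iic (ha : Continuous a) (hint : Integrable a) (t : ℝ) :
    HasDerivAt (fun t => ∫ s in Iic t, a s) (a t) t := by
  have hsplit : (fun t => ∫ s in Iic t, a s)
      = fun t => (∫ s in Iic 0, a s) + ∫ s in (0 : ℝ)..t, a s := by
    funext t
    rw [← intervalIntegral.integral_Iic_sub_Iic hint.integrableOn hint.integrableOn]
    ring
  rw [hsplit]
  exact (ha.integral_hasStrictDerivAt 0 t).hasDerivAt.const_add _

theorem tendsto_integral_Iic_atTop (hint : Integrable a) :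
    Tendsto (fun t => ∫ s in Iic t, a s) atTop (𝓝 (∫ s, a s)) :=
  (aecover_Iic tendsto_id).integral_tendsto_of_countably_generated hint

theorem strictMono_integral_Iic (ha : Continuous a) (hint : Integrable a) (hpos : ∀ s, 0 < a s) :
    StrictMono fun t => ∫ s in Iic t, a s :=
  strictMono_of_hasDerivAt_pos (hasDerivAt_integral_Iic ha hint) hpos

theorem integral_Iic_mem_Ioo (ha : Continuous a) (hint : Integrable a) (hpos : ∀ s, 0 < a s)
    (t : ℝ) : ∫ s in Iic t, a s ∈ Ioo 0 (∫ s, a s) :=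
  mem_Ioo_of_strictMono_of_tendsto (strictMono_integral_Iic ha hint hpos)
    (tendsto_integral_Iic_zero tendsto_id) (tendsto_integral_Iic_atTop hint) t

end IntegralIic

section BoundedComp

variable {E : Type*} [NormedAddCommGroup E] {g h : ℝ → ℝ} {α β : ℝ} {f : ℝ → E}

theorem exists_forall_Ioo_norm_comp_le_of_isBigO_atBot (hg : StrictMono g)
    (hmem : ∀ s, g s ∈ Ioo α β) (hinv : ∀ X ∈ Ioo α β, g (h X) = X)
    (hf : f =O[atBot] fun _ => (1 : ℝ)) :
    ∃ δ ∈ Ioo α β, ∃ C, ∀ X ∈ Ioo α δ, ‖f (h X)‖ ≤ C := by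
  obtain ⟨C, hC⟩ := hf.bound
  obtain ⟨s₀, hs₀⟩ := eventually_atBot.1 hC
  refine ⟨g s₀, hmem s₀, C, fun X hX => ?_⟩
  have hle : h X ≤ s₀ := by
    rw [← hg.le_iff_le, hinv X ⟨hX.1, hX.2.trans (hmem s₀).2⟩]
    exact hX.2.le
  simpa using hs₀ _ hle

theorem exists_forall_Ioo_norm_comp_le_of_isBigO_atTop (hg : StrictMono g)
    (hmem : ∀ s, g s ∈ Ioo α β) (hinv : ∀ X ∈ Ioo α β, g (h X) = X)
    (hf : f =O[atTop] fun _ => (1 : ℝ)) :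
    ∃ δ ∈ Ioo α β, ∃ C, ∀ X ∈ Ioo δ β, ‖f (h X)‖ ≤ C := by
  obtain ⟨C, hC⟩ := hf.bound
  obtain ⟨s₀, hs₀⟩ := eventually_atTop.1 hC
  refine ⟨g s₀, hmem s₀, C, fun X hX => ?_⟩
  have hle : s₀ ≤ h X := by
    rw [← hg.le_iff_le, hinv X ⟨(hmem s₀).1.trans hX.1, hX.2⟩]
    exact hX.1.le
  simpa using hs₀ _ hle

end BoundedComp

section InverseSquare

theorem isBigO_of_deriv_isBigO_atBot {E : Type*} [NormedAddCommGroup E] [NormedSpace ℝ E]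
    {f f' : ℝ → E} {φ φ' : ℝ → ℝ} (hf : ∀ᶠ s in atBot, HasDerivAt f (f' s) s)
    (hφ : ∀ᶠ s in atBot, HasDerivAt φ (φ' s) s) (hφ'_nonneg : ∀ᶠ s in atBot, 0 ≤ φ' s)
    (h : f' =O[atBot] φ') (hf0 : Tendsto f atBot (𝓝 0)) (hφ0 : Tendsto φ atBot (𝓝 0)) :
    f =O[atBot] φ := by
  obtain ⟨C, hC0, hC⟩ := h.exists_nonneg
  obtain ⟨s₀, hs₀⟩ := eventually_atBot.1 (hf.and (hφ.and (hφ'_nonneg.and hC.bound)))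
  refine IsBigO.of_bound C ?_
  filter_upwards [eventually_le_atBot s₀] with s hs
  have hincr : ∀ t ≤ s, ‖f s - f t‖ ≤ C * (φ s - φ t) := by
    intro t ht
    have hdf : ∀ y ∈ Icc t s, HasDerivAt (fun y => f y - f t) (f' y) y := fun y hy =>
      (hs₀ y (hy.2.trans hs)).1.sub_const _
    have hdφ : ∀ y ∈ Icc t s, HasDerivAt (fun y => C * (φ y - φ t)) (C * φ' y) y := fun y hy =>
      ((hs₀ y (hy.2.trans hs)).2.1.sub_const _).const_mul C
    refine image_norm_le_of_norm_deriv_right_le_deriv_boundary'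
      (fun y hy => (hdf y hy).continuousAt.continuousWithinAt)
      (fun y hy => (hdf y (Ico_subset_Icc_self hy)).hasDerivWithinAt) (by simp)
      (fun y hy => (hdφ y hy).continuousAt.continuousWithinAt)
      (fun y hy => (hdφ y (Ico_subset_Icc_self hy)).hasDerivWithinAt) (fun y hy => ?_)
      (right_mem_Icc.2 ht)
    obtain ⟨-, -, hnonneg, hbound⟩ := hs₀ y (hy.2.le.trans hs)
    rwa [Real.norm_of_nonneg hnonneg] at hbound
  have hle : ‖f s - 0‖ ≤ C * (φ s - 0) :=
    le_of_tendsto_of_tendsto (hf0.const_sub (f s)).norm ((hφ0.const_sub (φ s)).const_mul C)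
      ((eventually_le_atBot s).mono hincr)
  rw [sub_zero, sub_zero] at hle
  exact hle.trans (mul_le_mul_of_nonneg_left (Real.le_norm_self _) hC0)

variable {a X : ℝ → ℝ} {κ : ℝ}

theorem sub_const_mul_isBigO_cube_atBot (hκ : 0 < κ) (hpos : ∀ᶠ s in atBot, 0 < a s)
    (hdiff : ∀ᶠ s in atBot, DifferentiableAt ℝ a s) (ha0 : Tendsto a atBot (𝓝 0))
    (hlog : (fun s => logDeriv a s - κ) =O[atBot] fun s => a s ^ 2)
    (hX : ∀ᶠ s in atBot, HasDerivAt X (a s) s) (hX0 : Tendsto X atBot (𝓝 0)) :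
    (fun s => a s - κ * X s) =O[atBot] fun s => a s ^ 3 := by
  have hderiv : ∀ᶠ s in atBot, deriv a s = a s * logDeriv a s := by
    filter_upwards [hpos] with s hs
    rw [logDeriv_apply, mul_div_cancel₀ _ hs.ne']
  have hlogκ : Tendsto (logDeriv a) atBot (𝓝 κ) := by
    have h0 : Tendsto (fun s => logDeriv a s - κ) atBot (𝓝 0) :=
      hlog.trans_tendsto (by simpa using ha0.pow 2)
    simpa using h0.add_const κ
  have hcube : (fun s => a s ^ 3) =O[atBot] fun s => 3 * a s ^ 3 * logDeriv a s := by
    have h1 : (fun _ => (1 : ℝ)) =O[atBot] logDeriv a :=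
      (isBigO_const_const (1 : ℝ) hκ.ne' atBot).trans
        (isEquivalent_const_iff_tendsto hκ.ne' |>.2 hlogκ).isBigO_symm
    simpa using
      ((isBigO_refl (fun s => a s ^ 3) atBot).const_mul_right' (c := (3 : ℝ)) (by simp)).mul h1
  refine isBigO_of_deriv_isBigO_atBot (f' := fun s => a s * (logDeriv a s - κ))
    (φ' := fun s => 3 * a s ^ 3 * logDeriv a s) ?_ ?_ ?_ ?_ ?_ ?_
  · filter_upwards [hdiff, hX, hderiv] with s has hXs hds
    exact (has.hasDerivAt.sub (hXs.const_mul κ)).congr_deriv (by rw [hds]; ring)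
  · filter_upwards [hdiff, hderiv] with s has hds
    exact (has.hasDerivAt.pow 3).congr_deriv (by rw [hds]; push_cast; ring)
  · filter_upwards [hpos, hlogκ.eventually (lt_mem_nhds hκ)] with s has hls
    positivity
  · refine IsBigO.trans ?_ hcube
    exact ((isBigO_refl a atBot).mul hlog).congr_right fun s => by ring
  · simpa using ha0.sub (hX0.const_mul κ)
  · simpa using ha0.pow 3

theorem inv_sq_sub_inv_sq_isBigO_one {ι 𝕜 : Type*} [NormedField 𝕜] {l : Filter ι} {u v : ι → 𝕜}
    (hu : ∀ᶠ s in l, u s ≠ 0) (hu0 : Tendsto u l (𝓝 0))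
    (h : (fun s => u s - v s) =O[l] fun s => u s ^ 3) :
    (fun s => (u s ^ 2)⁻¹ - (v s ^ 2)⁻¹) =O[l] fun _ => (1 : 𝕜) := by
  have hvu : (fun s => v s - u s) =O[l] fun s => u s ^ 3 := h.symm
  have hequiv : v ~[l] u :=
    hvu.trans_isLittleO ((isLittleO_pow_id (by norm_num : 1 < 3)).comp_tendsto hu0)
  have hv : ∀ᶠ s in l, v s ≠ 0 := by
    filter_upwards [hu, hequiv.isBigO_symm.eq_zero_imp] with s hus hvs
    exact mt hvs hus
  have hinv : (fun s => (v s)⁻¹) =O[l] fun s => (u s)⁻¹ :=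
    hequiv.isBigO_symm.inv_rev (hu.mono fun s hus h0 => absurd h0 hus)
  have hprod := (hvu.mul (hequiv.isBigO.add (isBigO_refl u l))).mul
    (((isBigO_refl (fun s => (u s)⁻¹) l).pow 2).mul (hinv.pow 2))
  refine hprod.congr' ?_ ?_
  · filter_upwards [hu, hv] with s hus hvs
    simp only [inv_pow]
    field_simp
    ring
  · filter_upwards [hu] with s hus
    field_simp

theorem inv_sq_sub_inv_sq_isBigO_one_atBot (hκ : 0 < κ) (hpos : ∀ᶠ s in atBot, 0 < a s)
    (hdiff : ∀ᶠ s in atBot, DifferentiableAt ℝ a s) (ha0 : Tendsto a atBot (𝓝 0))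
    (hlog : (fun s => logDeriv a s - κ) =O[atBot] fun s => a s ^ 2)
    (hX : ∀ᶠ s in atBot, HasDerivAt X (a s) s) (hX0 : Tendsto X atBot (𝓝 0)) :
    (fun s => (a s ^ 2)⁻¹ - ((κ * X s) ^ 2)⁻¹) =O[atBot] fun _ => (1 : ℝ) :=
  inv_sq_sub_inv_sq_isBigO_one (hpos.mono fun _ h => h.ne') ha0
    (sub_const_mul_isBigO_cube_atBot hκ hpos hdiff ha0 hlog hX hX0)

theorem logDeriv_comp_neg (f : ℝ → ℝ) (s : ℝ) :
    logDeriv (fun t => f (-t)) s = -logDeriv f (-s) := by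
  simp [logDeriv_apply, deriv_comp_neg, neg_div]

theorem inv_sq_sub_inv_sq_isBigO_one_atTop (hκ : κ < 0) (hpos : ∀ᶠ s in atTop, 0 < a s)
    (hdiff : ∀ᶠ s in atTop, DifferentiableAt ℝ a s) (ha0 : Tendsto a atTop (𝓝 0))
    (hlog : (fun s => logDeriv a s - κ) =O[atTop] fun s => a s ^ 2)
    (hX : ∀ᶠ s in atTop, HasDerivAt X (-a s) s) (hX0 : Tendsto X atTop (𝓝 0)) :
    (fun s => (a s ^ 2)⁻¹ - ((κ * X s) ^ 2)⁻¹) =O[atTop] fun _ => (1 : ℝ) := by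
  have hneg : Tendsto (fun s : ℝ => -s) atBot atTop := tendsto_neg_atBot_atTop
  have hbot := inv_sq_sub_inv_sq_isBigO_one_atBot (a := fun s => a (-s)) (X := fun s => X (-s))
    (κ := -κ) (neg_pos.2 hκ) (hneg.eventually hpos)
    ((hneg.eventually hdiff).mono fun s h => h.comp s differentiable_neg.differentiableAt)
    (ha0.comp hneg)
    ((hlog.comp_tendsto hneg).neg_left.congr_left fun s => by
      simp only [logDeriv_comp_neg, Function.comp]; ring)
    ((hneg.eventually hX).mono fun s h =>
      (h.comp s (hasDerivAt_neg s)).congr_deriv (by ring))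
    (hX0.comp hneg)
  refine (hbot.comp_tendsto tendsto_neg_atTop_atBot).congr_left fun s => ?_
  simp

end InverseSquare

/-- The potential `q` of the Sturm–Liouville equation, as a function of the Regge–Wheeler
coordinate `x` instead of `X = g x`. -/
noncomputable def slPotential (a b c : ℝ → ℝ) (lam : ℝ) (s : ℝ) : ℂ :=
  Complex.I * ((deriv c s : ℝ) : ℂ) / (a s : ℂ) ^ 2 + ((c s : ℂ) - lam) ^ 2 / (a s : ℂ) ^ 2
    - Complex.I * ((c s : ℂ) - lam) * ((deriv a s : ℝ) : ℂ) / (a s : ℂ) ^ 3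
    - (b s : ℂ) ^ 2 / (a s : ℂ) ^ 2

/-- The coefficient `ω` of the inverse-square singularity of the potential at a horizon with
surface gravity `κ`, where `c₀` is the limit of `c`. -/
noncomputable def indicialCoeff (c₀ κ lam : ℝ) : ℂ :=
  ((c₀ : ℂ) - lam) ^ 2 / (κ : ℂ) ^ 2 - Complex.I * ((c₀ : ℂ) - lam) / (κ : ℂ)

/-- The numerator of the potential over the common denominator `a ^ 2`. -/
noncomputable def slNumerator (a b c : ℝ → ℝ) (lam : ℝ) (s : ℝ) : ℂ :=
  Complex.I * ((deriv c s : ℝ) : ℂ) + ((c s : ℂ) - lam) ^ 2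
    - Complex.I * ((c s : ℂ) - lam) * ((logDeriv a s : ℝ) : ℂ) - (b s : ℂ) ^ 2

/-- The limit of the numerator `slNumerator` at a horizon. -/
noncomputable def slNumeratorLimit (c₀ κ lam : ℝ) : ℂ :=
  ((c₀ : ℂ) - lam) ^ 2 - Complex.I * ((c₀ : ℂ) - lam) * κ

section SturmLiouville

variable {a b c : ℝ → ℝ} {lam : ℝ}

theorem slPotential_eq_slNumerator_mul (s : ℝ) :
    slPotential a b c lam s = slNumerator a b c lam s * ((a s ^ 2)⁻¹ : ℝ) := by
  simp only [slPotential, slNumerator, logDeriv_apply]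
  push_cast
  ring

theorem indicialCoeff_eq_slNumeratorLimit_div {κ : ℝ} (hκ : κ ≠ 0) (c₀ lam : ℝ) :
    indicialCoeff c₀ κ lam = slNumeratorLimit c₀ κ lam / (κ : ℂ) ^ 2 := by
  have hκ' : (κ : ℂ) ≠ 0 := Complex.ofReal_ne_zero.2 hκ
  rw [indicialCoeff, slNumeratorLimit]
  field_simp

variable {c₀ κ : ℝ} {l : Filter ℝ}

theorem slNumerator_sub_isBigO (ha : a =O[l] fun _ => (1 : ℝ))
    (hlog : (fun s => logDeriv a s - κ) =O[l] fun s => a s ^ 2)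
    (hc : (fun s => c s - c₀) =O[l] fun s => a s ^ 2)
    (hc' : deriv c =O[l] fun s => a s ^ 2) (hb : b =O[l] a) :
    (fun s => slNumerator a b c lam s - slNumeratorLimit c₀ κ lam) =O[l] fun s => a s ^ 2 := by
  have hca : (fun s => c s - lam) =O[l] fun _ => (1 : ℝ) := by
    have hbdd := (hc.trans (by simpa using ha.pow 2)).add
      (isBigO_const_const (c₀ - lam) (one_ne_zero (α := ℝ)) l)
    exact hbdd.congr_left fun s => by ring
  have hsq : (fun s => (c s - lam) ^ 2 - (c₀ - lam) ^ 2) =O[l] fun s => a s ^ 2 := by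
    have hsum := hca.add (isBigO_const_const (c₀ - lam) (one_ne_zero (α := ℝ)) l)
    simpa using (hc.mul hsum).congr_left fun s => by ring
  have hcross : (fun s => (c s - lam) * logDeriv a s - (c₀ - lam) * κ) =O[l] fun s => a s ^ 2 := by
    have h1 : (fun s => (c s - lam) * (logDeriv a s - κ)) =O[l] fun s => a s ^ 2 := by
      simpa using hca.mul hlog
    exact (h1.add (hc.const_mul_left κ)).congr_left fun s => by ring
  have hreal : (fun s => (c s - lam) ^ 2 - (c₀ - lam) ^ 2 - b s ^ 2) =O[l] fun s => a s ^ 2 :=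
    hsq.sub (hb.pow 2)
  have himag : (fun s => deriv c s - ((c s - lam) * logDeriv a s - (c₀ - lam) * κ))
      =O[l] fun s => a s ^ 2 := hc'.sub hcross
  refine ((Complex.isBigO_ofReal_left.2 hreal).add
    ((Complex.isBigO_ofReal_left.2 himag).const_mul_left Complex.I)).congr_left fun s => ?_
  simp only [slNumerator, slNumeratorLimit]
  push_cast
  ring

theorem slPotential_sub_isBigO_one {X : ℝ → ℝ} (hκ : κ ≠ 0) (ha : ∀ᶠ s in l, a s ≠ 0)
    (ha0 : a =O[l] fun _ => (1 : ℝ))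
    (hlog : (fun s => logDeriv a s - κ) =O[l] fun s => a s ^ 2)
    (hc : (fun s => c s - c₀) =O[l] fun s => a s ^ 2)
    (hc' : deriv c =O[l] fun s => a s ^ 2) (hb : b =O[l] a)
    (hX : (fun s => (a s ^ 2)⁻¹ - ((κ * X s) ^ 2)⁻¹) =O[l] fun _ => (1 : ℝ)) :
    (fun s => slPotential a b c lam s - indicialCoeff c₀ κ lam / (X s : ℂ) ^ 2)
      =O[l] fun _ => (1 : ℝ) := by
  have hvar : (fun s => (slNumerator a b c lam s - slNumeratorLimit c₀ κ lam)
      * ((a s ^ 2)⁻¹ : ℝ)) =O[l] fun _ => (1 : ℝ) := by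
    refine ((slNumerator_sub_isBigO ha0 hlog hc hc' hb).mul
      (Complex.isBigO_ofReal_left.2 (isBigO_refl (fun s => (a s ^ 2)⁻¹) l))).congr' .rfl ?_
    filter_upwards [ha] with s hs
    exact mul_inv_cancel₀ (pow_ne_zero 2 hs)
  refine (hvar.add ((Complex.isBigO_ofReal_left.2 hX).const_mul_left
    (slNumeratorLimit c₀ κ lam))).congr_left fun s => ?_
  rw [slPotential_eq_slNumerator_mul, indicialCoeff_eq_slNumeratorLimit_div hκ]
  push_cast
  ring

end SturmLiouville

/-- The coefficient `a = √F / r` of the Dirac operator, along a radial function `r`. -/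
noncomputable def angularPotential (F r : ℝ → ℝ) (s : ℝ) : ℝ := √(F (r s)) / r s

/-- The potential `slPotential` of a Dirac field, for which `b = m √F` and `c = k / r` with `m` the
mass of the field and `k` the product of the charges of the field and the black hole. -/
noncomputable def diracPotential (F r : ℝ → ℝ) (m k lam : ℝ) : ℝ → ℂ :=
  slPotential (angularPotential F r) (fun s => m * √(F (r s))) (fun s => k / r s) lam

/-- The surface gravity `κ` of the horizon at a zero `p` of the metric function `F`. -/
noncomputable def surfaceGravity (F : ℝ → ℝ) (p : ℝ) : ℝ := deriv F p / 2

/-- Along `l`, the function `r` solves `r' = F r` in the region `F > 0` and converges to a simple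
zero `p > 0` of `F`: an end of the exterior region, seen in the Regge–Wheeler coordinate. -/
structure ApproachesHorizon (F r : ℝ → ℝ) (l : Filter ℝ) (p : ℝ) : Prop where
  pos : 0 < p
  contDiffAt : ContDiffAt ℝ 2 F p
  apply_eq_zero : F p = 0
  surfaceGravity_ne_zero : surfaceGravity F p ≠ 0
  tendsto : Tendsto r l (𝓝 p)
  hasDerivAt : ∀ᶠ s in l, HasDerivAt r (F (r s)) s
  apply_pos : ∀ᶠ s in l, 0 < F (r s)

theorem logDeriv_sqrt {f : ℝ → ℝ} {s : ℝ} (hf : DifferentiableAt ℝ f s) (hpos : 0 < f s) :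
    logDeriv (fun t => √(f t)) s = logDeriv f s / 2 := by
  rw [logDeriv_apply, logDeriv_apply, deriv_sqrt hf hpos.ne', div_div, mul_assoc,
    Real.mul_self_sqrt hpos.le, div_div, mul_comm]

theorem angularPotential_pos {F r : ℝ → ℝ} {s : ℝ} (hF : 0 < F (r s)) (hr : 0 < r s) :
    0 < angularPotential F r s :=
  div_pos (Real.sqrt_pos.2 hF) hr

theorem angularPotential_sq {F r : ℝ → ℝ} {s : ℝ} (h : 0 ≤ F (r s)) :
    angularPotential F r s ^ 2 = F (r s) / r s ^ 2 := by
  rw [angularPotential, div_pow, Real.sq_sqrt h]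

namespace ApproachesHorizon

variable {F r X : ℝ → ℝ} {l : Filter ℝ} {p : ℝ}

theorem eventually_pos (h : ApproachesHorizon F r l p) : ∀ᶠ s in l, 0 < r s :=
  h.tendsto.eventually (lt_mem_nhds h.pos)

theorem eventually_differentiableAt (h : ApproachesHorizon F r l p) :
    ∀ᶠ s in l, DifferentiableAt ℝ F (r s) :=
  h.tendsto.eventually <| (h.contDiffAt.eventually (by simp)).mono fun _ hy =>
    hy.differentiableAt (by simp)

theorem eventually_angularPotential_pos (h : ApproachesHorizon F r l p) :
    ∀ᶠ s in l, 0 < angularPotential F r s := by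
  filter_upwards [h.eventually_pos, h.apply_pos] with s hr hF
  exact angularPotential_pos hF hr

theorem tendsto_angularPotential (h : ApproachesHorizon F r l p) :
    Tendsto (angularPotential F r) l (𝓝 0) := by
  have hlim := ((h.contDiffAt.continuousAt.tendsto.comp h.tendsto).sqrt).div h.tendsto h.pos.ne'
  simpa [h.apply_eq_zero] using! hlim

theorem isBigO_angularPotential_sq (h : ApproachesHorizon F r l p) :
    (fun s => F (r s)) =O[l] fun s => angularPotential F r s ^ 2 := by
  have hmul : (fun s => r s ^ 2 * angularPotential F r s ^ 2)
      =O[l] fun s => angularPotential F r s ^ 2 := by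
    simpa using ((h.tendsto.isBigO_one ℝ).pow 2).mul
      (isBigO_refl (fun s => angularPotential F r s ^ 2) l)
  refine hmul.congr' ?_ .rfl
  filter_upwards [h.eventually_pos, h.apply_pos] with s hr hF
  rw [angularPotential_sq hF.le, mul_div_cancel₀ _ (pow_ne_zero 2 hr.ne')]

theorem sub_isBigO_angularPotential_sq (h : ApproachesHorizon F r l p) :
    (fun s => r s - p) =O[l] fun s => angularPotential F r s ^ 2 := by
  have hsimple : (fun y => y - p) =O[𝓝 p] F := by
    have hF := (h.contDiffAt.differentiableAt (by simp)).hasDerivAt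
    have hpair : Tendsto (fun y : ℝ => (y, p)) (𝓝 p) (𝓝 p ×ˢ pure p) :=
      tendsto_id.prodMk (tendsto_pure.2 (Eventually.of_forall fun _ => rfl))
    have hF' : deriv F p ≠ 0 := (div_ne_zero_iff.1 h.surfaceGravity_ne_zero).1
    simpa [Function.comp_def, h.apply_eq_zero] using
      (HasDerivAtFilter.isTheta_sub hF hF').isBigO_symm.comp_tendsto hpair
  exact (hsimple.comp_tendsto h.tendsto).trans h.isBigO_angularPotential_sq

theorem comp_sub_isBigO_angularPotential_sq (h : ApproachesHorizon F r l p) {f : ℝ → ℝ}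
    (hf : DifferentiableAt ℝ f p) :
    (fun s => f (r s) - f p) =O[l] fun s => angularPotential F r s ^ 2 :=
  (hf.isBigO_sub.comp_tendsto h.tendsto).trans h.sub_isBigO_angularPotential_sq

theorem differentiableAt_angularPotential (h : ApproachesHorizon F r l p) :
    ∀ᶠ s in l, DifferentiableAt ℝ (angularPotential F r) s := by
  filter_upwards [h.eventually_pos, h.apply_pos, h.hasDerivAt, h.eventually_differentiableAt]
    with s hr hF hdr hdF
  exact ((hdF.comp s hdr.differentiableAt).sqrt hF.ne').div hdr.differentiableAt hr.ne'

theorem logDeriv_angularPotential (h : ApproachesHorizon F r l p) :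
    ∀ᶠ s in l, logDeriv (angularPotential F r) s = deriv F (r s) / 2 - F (r s) / r s := by
  filter_upwards [h.eventually_pos, h.apply_pos, h.hasDerivAt, h.eventually_differentiableAt]
    with s hr hF hdr hdF
  have hcomp : HasDerivAt (fun t => F (r t)) (deriv F (r s) * F (r s)) s :=
    hdF.hasDerivAt.comp s hdr
  have hdiv := logDeriv_div s (Real.sqrt_pos.2 hF).ne' hr.ne'
    (hcomp.differentiableAt.sqrt hF.ne') hdr.differentiableAt
  rw [logDeriv_sqrt hcomp.differentiableAt hF, logDeriv_apply (fun t => F (r t)),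
    logDeriv_apply r, hcomp.deriv, hdr.deriv, mul_div_cancel_right₀ _ hF.ne'] at hdiv
  exact hdiv

theorem logDeriv_angularPotential_sub_isBigO (h : ApproachesHorizon F r l p) :
    (fun s => logDeriv (angularPotential F r) s - surfaceGravity F p)
      =O[l] fun s => angularPotential F r s ^ 2 := by
  have hderiv : DifferentiableAt ℝ (deriv F) p :=
    (h.contDiffAt.derivWithin (m := 1) (by norm_num)).differentiableAt (by simp)
  have hdiff : DifferentiableAt ℝ (fun y => deriv F y / 2 - F y / y) p :=
    (hderiv.div_const 2).sub
      ((h.contDiffAt.differentiableAt (by simp)).div differentiableAt_id h.pos.ne')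
  refine (h.comp_sub_isBigO_angularPotential_sq hdiff).congr' ?_ .rfl
  filter_upwards [h.logDeriv_angularPotential] with s hs
  rw [hs, surfaceGravity, h.apply_eq_zero, zero_div, sub_zero]

theorem deriv_const_div_isBigO (h : ApproachesHorizon F r l p) (k : ℝ) :
    deriv (fun s => k / r s) =O[l] fun s => angularPotential F r s ^ 2 := by
  refine (isBigO_const_mul_self (-k) (fun s => angularPotential F r s ^ 2) l).congr' ?_ .rfl
  filter_upwards [h.eventually_pos, h.apply_pos, h.hasDerivAt] with s hr hF hdr
  rw [angularPotential_sq hF.le, ((hasDerivAt_const s k).fun_div hdr hr.ne').deriv]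
  ring

theorem const_mul_sqrt_isBigO (h : ApproachesHorizon F r l p) (m : ℝ) :
    (fun s => m * √(F (r s))) =O[l] angularPotential F r := by
  have hmul : (fun s => m * r s * angularPotential F r s) =O[l] angularPotential F r := by
    simpa using ((h.tendsto.isBigO_one ℝ).const_mul_left m).mul
      (isBigO_refl (angularPotential F r) l)
  refine hmul.congr' ?_ .rfl
  filter_upwards [h.eventually_pos] with s hr
  rw [angularPotential, mul_assoc, mul_div_cancel₀ _ hr.ne']

theorem diracPotential_sub_isBigO_one (h : ApproachesHorizon F r l p)
    (hX : (fun s => (angularPotential F r s ^ 2)⁻¹ - ((surfaceGravity F p * X s) ^ 2)⁻¹)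
      =O[l] fun _ => (1 : ℝ)) (m k lam : ℝ) :
    (fun s => diracPotential F r m k lam s
      - indicialCoeff (k / p) (surfaceGravity F p) lam / (X s : ℂ) ^ 2) =O[l] fun _ => (1 : ℝ) :=
  slPotential_sub_isBigO_one h.surfaceGravity_ne_zero
    (h.eventually_angularPotential_pos.mono fun _ hs => hs.ne')
    (h.tendsto_angularPotential.isBigO_one ℝ) h.logDeriv_angularPotential_sub_isBigO
    (h.comp_sub_isBigO_angularPotential_sq
      ((differentiableAt_const k).div differentiableAt_id h.pos.ne'))
    (h.deriv_const_div_isBigO k) (h.const_mul_sqrt_isBigO m) hX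

theorem diracPotential_sub_isBigO_one_atBot (h : ApproachesHorizon F r atBot p)
    (hκ : 0 < surfaceGravity F p)
    (hX : ∀ᶠ s in atBot, HasDerivAt X (angularPotential F r s) s) (hX0 : Tendsto X atBot (𝓝 0))
    (m k lam : ℝ) :
    (fun s => diracPotential F r m k lam s
      - indicialCoeff (k / p) (surfaceGravity F p) lam / (X s : ℂ) ^ 2)
      =O[atBot] fun _ => (1 : ℝ) :=
  h.diracPotential_sub_isBigO_one (inv_sq_sub_inv_sq_isBigO_one_atBot hκ
    h.eventually_angularPotential_pos h.differentiableAt_angularPotential h.tendsto_angularPotential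
    h.logDeriv_angularPotential_sub_isBigO hX hX0) m k lam

theorem diracPotential_sub_isBigO_one_atTop (h : ApproachesHorizon F r atTop p)
    (hκ : surfaceGravity F p < 0)
    (hX : ∀ᶠ s in atTop, HasDerivAt X (-angularPotential F r s) s) (hX0 : Tendsto X atTop (𝓝 0))
    (m k lam : ℝ) :
    (fun s => diracPotential F r m k lam s
      - indicialCoeff (k / p) (surfaceGravity F p) lam / (X s : ℂ) ^ 2)
      =O[atTop] fun _ => (1 : ℝ) :=
  h.diracPotential_sub_isBigO_one (inv_sq_sub_inv_sq_isBigO_one_atTop hκ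
    h.eventually_angularPotential_pos h.differentiableAt_angularPotential h.tendsto_angularPotential
    h.logDeriv_angularPotential_sub_isBigO hX hX0) m k lam

section RightInverse

variable {α β : ℝ} {x : ℝ → ℝ}

theorem of_rightInverse_atBot (hα : 0 < α) (hF : ContDiffAt ℝ 2 F α) (hFα : F α = 0)
    (hκ : surfaceGravity F α ≠ 0) (hpos : ∀ y ∈ Ioo α β, 0 < F y)
    (hx : ∀ y ∈ Ioo α β, HasDerivAt x (F y)⁻¹ y) (hmem : ∀ s, r s ∈ Ioo α β)
    (hinv : ∀ s, x (r s) = s) : ApproachesHorizon F r atBot α := by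
  have hmono := strictMonoOn_Ioo_of_hasDerivAt_inv hpos hx
  exact ⟨hα, hF, hFα, hκ, tendsto_atBot_of_range_eq_Ioo
    (strictMono_of_strictMonoOn_rightInverse hmono hmem hinv).monotone
    (range_eq_of_strictMonoOn_rightInverse hmono hmem hinv),
    .of_forall (hasDerivAt_rightInverse_of_hasDerivAt_inv hpos hx hmem hinv),
    .of_forall fun s => hpos _ (hmem s)⟩

theorem of_rightInverse_atTop (hβ : 0 < β) (hF : ContDiffAt ℝ 2 F β) (hFβ : F β = 0)
    (hκ : surfaceGravity F β ≠ 0) (hpos : ∀ y ∈ Ioo α β, 0 < F y)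
    (hx : ∀ y ∈ Ioo α β, HasDerivAt x (F y)⁻¹ y) (hmem : ∀ s, r s ∈ Ioo α β)
    (hinv : ∀ s, x (r s) = s) : ApproachesHorizon F r atTop β := by
  have hmono := strictMonoOn_Ioo_of_hasDerivAt_inv hpos hx
  exact ⟨hβ, hF, hFβ, hκ, tendsto_atTop_of_range_eq_Ioo
    (strictMono_of_strictMonoOn_rightInverse hmono hmem hinv).monotone
    (range_eq_of_strictMonoOn_rightInverse hmono hmem hinv),
    .of_forall (hasDerivAt_rightInverse_of_hasDerivAt_inv hpos hx hmem hinv),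
    .of_forall fun s => hpos _ (hmem s)⟩

end RightInverse

end ApproachesHorizon

section Endpoints

variable {F r h : ℝ → ℝ} {p : ℝ}

theorem continuous_angularPotential (hF : ∀ s, ContinuousAt F (r s)) (hr : Continuous r)
    (hr0 : ∀ s, r s ≠ 0) : Continuous (angularPotential F r) :=
  continuous_iff_continuousAt.2 fun s =>
    (((hF s).comp hr.continuousAt).sqrt).div hr.continuousAt (hr0 s)

theorem ApproachesHorizon.exists_forall_Ioo_norm_diracPotential_sub_le_atBot
    (hp : ApproachesHorizon F r atBot p) (hκ : 0 < surfaceGravity F p)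
    (ha : Continuous (angularPotential F r)) (hint : Integrable (angularPotential F r))
    (hpos : ∀ s, 0 < angularPotential F r s)
    (hinv : ∀ X ∈ Ioo 0 (∫ s, angularPotential F r s), ∫ s in Iic (h X), angularPotential F r s = X)
    (m k lam : ℝ) :
    ∃ δ ∈ Ioo 0 (∫ s, angularPotential F r s), ∃ C, ∀ X ∈ Ioo 0 δ,
      ‖diracPotential F r m k lam (h X)
        - indicialCoeff (k / p) (surfaceGravity F p) lam / (X : ℂ) ^ 2‖ ≤ C := by
  obtain ⟨δ, hδ, C, hC⟩ := exists_forall_Ioo_norm_comp_le_of_isBigO_atBot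
    (strictMono_integral_Iic ha hint hpos) (integral_Iic_mem_Ioo ha hint hpos) hinv
    (hp.diracPotential_sub_isBigO_one_atBot hκ (.of_forall (hasDerivAt_integral_Iic ha hint))
      (tendsto_integral_Iic_zero tendsto_id) m k lam)
  refine ⟨δ, hδ, C, fun X hX => ?_⟩
  simpa only [hinv X ⟨hX.1, hX.2.trans hδ.2⟩] using hC X hX

theorem ApproachesHorizon.exists_forall_Ioo_norm_diracPotential_sub_le_atTop
    (hp : ApproachesHorizon F r atTop p) (hκ : surfaceGravity F p < 0)
    (ha : Continuous (angularPotential F r)) (hint : Integrable (angularPotential F r))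
    (hpos : ∀ s, 0 < angularPotential F r s)
    (hinv : ∀ X ∈ Ioo 0 (∫ s, angularPotential F r s), ∫ s in Iic (h X), angularPotential F r s = X)
    (m k lam : ℝ) :
    ∃ δ ∈ Ioo 0 (∫ s, angularPotential F r s), ∃ C, ∀ X ∈ Ioo δ (∫ s, angularPotential F r s),
      ‖diracPotential F r m k lam (h X)
        - indicialCoeff (k / p) (surfaceGravity F p) lam
          / (((∫ s, angularPotential F r s : ℝ) : ℂ) - X) ^ 2‖ ≤ C := by
  have hX0 : Tendsto (fun t => (∫ s, angularPotential F r s) - ∫ s in Iic t, angularPotential F r s)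
      atTop (𝓝 0) := by
    simpa using (tendsto_integral_Iic_atTop hint).const_sub (∫ s, angularPotential F r s)
  obtain ⟨δ, hδ, C, hC⟩ := exists_forall_Ioo_norm_comp_le_of_isBigO_atTop
    (strictMono_integral_Iic ha hint hpos) (integral_Iic_mem_Ioo ha hint hpos) hinv
    (hp.diracPotential_sub_isBigO_one_atTop hκ
      (.of_forall fun t => (hasDerivAt_integral_Iic ha hint t).const_sub _) hX0 m k lam)
  refine ⟨δ, hδ, C, fun X hX => ?_⟩
  simpa only [hinv X ⟨hδ.1.trans hX.1, hX.2⟩, Complex.ofReal_sub] using hC X hX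

theorem exists_forall_Ioo_norm_diracPotential_sub_le {α β : ℝ} {x : ℝ → ℝ} (hα : 0 < α)
    (hF : ∀ y ∈ Icc α β, ContDiffAt ℝ 2 F y) (hFα : F α = 0) (hFβ : F β = 0)
    (hκα : 0 < surfaceGravity F α) (hκβ : surfaceGravity F β < 0) (hpos : ∀ y ∈ Ioo α β, 0 < F y)
    (hx : ∀ y ∈ Ioo α β, HasDerivAt x (F y)⁻¹ y) (hmem : ∀ s, r s ∈ Ioo α β)
    (hinv : ∀ s, x (r s) = s) (hint : Integrable (angularPotential F r))
    (hh : ∀ X ∈ Ioo 0 (∫ s, angularPotential F r s), ∫ s in Iic (h X), angularPotential F r s = X)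
    (m k lam : ℝ) :
    (∃ δ ∈ Ioo 0 (∫ s, angularPotential F r s), ∃ C, ∀ X ∈ Ioo 0 δ,
      ‖diracPotential F r m k lam (h X)
        - indicialCoeff (k / α) (surfaceGravity F α) lam / (X : ℂ) ^ 2‖ ≤ C) ∧
    ∃ δ ∈ Ioo 0 (∫ s, angularPotential F r s), ∃ C, ∀ X ∈ Ioo δ (∫ s, angularPotential F r s),
      ‖diracPotential F r m k lam (h X)
        - indicialCoeff (k / β) (surfaceGravity F β) lam
          / (((∫ s, angularPotential F r s : ℝ) : ℂ) - X) ^ 2‖ ≤ C := by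
  have hαβ : α < β := (hmem 0).1.trans (hmem 0).2
  have hr0 : ∀ s, 0 < r s := fun s => hα.trans (hmem s).1
  have hr : Differentiable ℝ r := fun s =>
    (hasDerivAt_rightInverse_of_hasDerivAt_inv hpos hx hmem hinv s).differentiableAt
  have hcont : Continuous (angularPotential F r) := continuous_angularPotential
    (fun s => (hF _ (Ioo_subset_Icc_self (hmem s))).continuousAt) hr.continuous
    fun s => (hr0 s).ne'
  have hapos : ∀ s, 0 < angularPotential F r s := fun s =>
    angularPotential_pos (hpos _ (hmem s)) (hr0 s)
  have hbot : ApproachesHorizon F r atBot α := .of_rightInverse_atBot hα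
    (hF _ (left_mem_Icc.2 hαβ.le)) hFα hκα.ne' hpos hx hmem hinv
  have htop : ApproachesHorizon F r atTop β := .of_rightInverse_atTop (hα.trans hαβ)
    (hF _ (right_mem_Icc.2 hαβ.le)) hFβ hκβ.ne hpos hx hmem hinv
  exact ⟨hbot.exists_forall_Ioo_norm_diracPotential_sub_le_atBot hκα hcont hint hapos hh m k lam,
    htop.exists_forall_Ioo_norm_diracPotential_sub_le_atTop hκβ hcont hint hapos hh m k lam⟩

end Endpoints

section HorizonFn

open Polynomial

/-- The metric function of the Reissner–Nordström–de Sitter black hole with mass `M`, charge `Q`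
and cosmological constant `Λ`. -/
noncomputable def horizonFn (M Q Λ r : ℝ) : ℝ := 1 - 2 * M / r + Q ^ 2 / r ^ 2 - Λ * r ^ 2 / 3

/-- The quartic polynomial `r ^ 2 * horizonFn M Q Λ r`. -/
noncomputable def horizonPolynomial (M Q Λ : ℝ) : ℝ[X] :=
  C (-Λ / 3) * X ^ 4 + X ^ 2 - C (2 * M) * X + C (Q ^ 2)

/-- The Regge–Wheeler coordinate on `(rm, rp)`, with the convention `log (rp - r)` that keeps the
argument of the logarithm positive at the outer horizon. -/
noncomputable def reggeWheelerCoord (F : ℝ → ℝ) (rn rc rm rp r : ℝ) : ℝ :=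
  1 / (2 * surfaceGravity F rn) * Real.log (r - rn)
    + 1 / (2 * surfaceGravity F rc) * Real.log (r - rc)
    + 1 / (2 * surfaceGravity F rm) * Real.log (r - rm)
    + 1 / (2 * surfaceGravity F rp) * Real.log (rp - r)

variable {M Q Λ r : ℝ}

theorem natDegree_horizonPolynomial (hΛ : Λ ≠ 0) : (horizonPolynomial M Q Λ).natDegree = 4 := by
  rw [horizonPolynomial]
  compute_degree!

theorem eval_horizonPolynomial (hr : r ≠ 0) :
    (horizonPolynomial M Q Λ).eval r = r ^ 2 * horizonFn M Q Λ r := by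
  simp only [horizonPolynomial, horizonFn, eval_add, eval_sub, eval_mul, eval_C, eval_X, eval_pow]
  field_simp
  ring

theorem contDiffAt_horizonFn (hr : r ≠ 0) {n : WithTop ℕ∞} :
    ContDiffAt ℝ n (horizonFn M Q Λ) r := by
  unfold horizonFn
  fun_prop (disch := simpa)

theorem eval_derivative_horizonPolynomial (hr : r ≠ 0) (hroot : horizonFn M Q Λ r = 0) :
    (horizonPolynomial M Q Λ).derivative.eval r = r ^ 2 * deriv (horizonFn M Q Λ) r := by
  have hprod := (hasDerivAt_pow 2 r).mul
    ((contDiffAt_horizonFn (M := M) (Q := Q) (Λ := Λ) (n := 1) hr).differentiableAt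
      one_ne_zero).hasDerivAt
  have heq : (fun y => (horizonPolynomial M Q Λ).eval y)
      =ᶠ[𝓝 r] fun y => y ^ 2 * horizonFn M Q Λ y :=
    (eventually_ne_nhds hr).mono fun _ => eval_horizonPolynomial
  have hunique := ((horizonPolynomial M Q Λ).hasDerivAt r).unique (hprod.congr_of_eventuallyEq heq)
  simpa [hroot] using hunique

theorem hasDerivAt_sum_log_div_deriv_horizonFn (hΛ : Λ ≠ 0) {s : Finset ℝ} (hcard : s.card = 4)
    (h0 : (0 : ℝ) ∉ s) (hroot : ∀ a ∈ s, horizonFn M Q Λ a = 0) (hr : r ≠ 0) (hrs : r ∉ s) :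
    HasDerivAt (fun y => ∑ a ∈ s, (deriv (horizonFn M Q Λ) a)⁻¹ * Real.log (y - a))
      (horizonFn M Q Λ r)⁻¹ r := by
  have hne : ∀ a ∈ s, a ≠ 0 := fun a ha => ne_of_mem_of_not_mem ha h0
  have hcancel : ∀ {y : ℝ}, y ≠ 0 → ∀ z, y ^ 2 / (y ^ 2 * z) = z⁻¹ := fun hy z => by
    rw [div_mul_cancel_left₀ (pow_ne_zero 2 hy)]
  have hlog := hasDerivAt_sum_log_sub (P := horizonPolynomial M Q Λ) (f := X ^ 2) (s := s) (x := r)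
    (fun a ha => by rw [eval_horizonPolynomial (hne a ha), hroot a ha, mul_zero])
    ((natDegree_horizonPolynomial hΛ).trans hcard.symm) (by rw [degree_X_pow, hcard]; norm_num) hrs
  simp only [eval_pow, eval_X, eval_horizonPolynomial hr, hcancel hr] at hlog
  refine hlog.congr_of_eventuallyEq (.of_forall fun y => Finset.sum_congr rfl fun a ha => ?_)
  rw [eval_derivative_horizonPolynomial (hne a ha) (hroot a ha), hcancel (hne a ha)]

theorem hasDerivAt_reggeWheelerCoord {rn rc rm rp : ℝ} (hΛ : Λ ≠ 0) (hrn : rn < 0) (hrc : 0 < rc)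
    (hrcm : rc < rm) (hFn : horizonFn M Q Λ rn = 0) (hFc : horizonFn M Q Λ rc = 0)
    (hFm : horizonFn M Q Λ rm = 0) (hFp : horizonFn M Q Λ rp = 0) (hr : r ∈ Ioo rm rp) :
    HasDerivAt (reggeWheelerCoord (horizonFn M Q Λ) rn rc rm rp) (horizonFn M Q Λ r)⁻¹ r := by
  obtain ⟨hmr, hrp⟩ := hr
  have hn : rn ∉ ({rc, rm, rp} : Finset ℝ) := by
    simp only [Finset.mem_insert, Finset.mem_singleton]
    grind
  have hc : rc ∉ ({rm, rp} : Finset ℝ) := by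
    simp only [Finset.mem_insert, Finset.mem_singleton]
    grind
  have hm : rm ∉ ({rp} : Finset ℝ) := Finset.notMem_singleton.2 (hmr.trans hrp).ne
  have hsum : reggeWheelerCoord (horizonFn M Q Λ) rn rc rm rp = fun y =>
      ∑ a ∈ ({rn, rc, rm, rp} : Finset ℝ), (deriv (horizonFn M Q Λ) a)⁻¹ * Real.log (y - a) := by
    funext y
    simp only [reggeWheelerCoord, surfaceGravity]
    rw [← Real.log_neg_eq_log (rp - y), neg_sub, Finset.sum_insert hn, Finset.sum_insert hc,
      Finset.sum_insert hm, Finset.sum_singleton]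
    ring
  rw [hsum]
  refine hasDerivAt_sum_log_div_deriv_horizonFn hΛ ?_ ?_ ?_ (by linarith) ?_
  · rw [Finset.card_insert_of_notMem hn, Finset.card_insert_of_notMem hc,
      Finset.card_insert_of_notMem hm, Finset.card_singleton]
  · simp only [Finset.mem_insert, Finset.mem_singleton]
    grind
  · simp [hFn, hFc, hFm, hFp]
  · simp only [Finset.mem_insert, Finset.mem_singleton]
    grind

end HorizonFn

/-- The Sturm–Liouville potential
`q(X) = i c'(h(X))/a(h(X))² + (c(h(X))−λ)²/a(h(X))² − i(c(h(X))−λ)a'(h(X))/a(h(X))³ − b(h(X))²/a(h(X))²`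
has quadratic singularities at the two endpoints of `(0,A)`: with
`ω₋ = (c₋−λ)²/κ₋² − i(c₋−λ)/κ₋` and `ω₊ = (c₊−λ)²/κ₊² − i(c₊−λ)/κ₊`,
the functions `X ↦ q(X) − ω₋/X²` and `X ↦ q(X) − ω₊/(A−X)²` are bounded near `0⁺` and `A⁻`
respectively. -/
theorem stmt_5 (M Q Λ : ℝ) (hM : 0 < M) (hΛ : 0 < Λ)
    (rn rc rm rp : ℝ) (hrn : rn < 0) (hrc : 0 < rc) (hrcm : rc < rm) (hrmp : rm < rp)
    (F : ℝ → ℝ)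
    (hF : ∀ r, F r = 1 - 2 * M / r + Q ^ 2 / r ^ 2 - Λ * r ^ 2 / 3)
    (hFn : F rn = 0) (hFc : F rc = 0) (hFm : F rm = 0) (hFp : F rp = 0)
    (hFpos : ∀ r ∈ Set.Ioo rm rp, 0 < F r)
    (κn κc κm κp : ℝ)
    (hκn : κn = deriv F rn / 2) (hκc : κc = deriv F rc / 2)
    (hκm : κm = deriv F rm / 2) (hκp : κp = deriv F rp / 2)
    (hκmpos : 0 < κm) (hκpneg : κp < 0)
    (x : ℝ → ℝ)
    (hx : ∀ r, x r = 1 / (2 * κn) * Real.log (r - rn) + 1 / (2 * κc) * Real.log (r - rc)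
      + 1 / (2 * κm) * Real.log (r - rm) + 1 / (2 * κp) * Real.log (rp - r))
    (rfun : ℝ → ℝ)
    (hrmem : ∀ s, rfun s ∈ Set.Ioo rm rp) (hrinv : ∀ s, x (rfun s) = s)
    (m q : ℝ) (a b c : ℝ → ℝ)
    (ha : ∀ s, a s = Real.sqrt (F (rfun s)) / rfun s)
    (hb : ∀ s, b s = m * Real.sqrt (F (rfun s)))
    (hc : ∀ s, c s = q * Q / rfun s)
    (cm cp : ℝ) (hcm : cm = q * Q / rm) (hcp : cp = q * Q / rp)
    (haint : Integrable a)
    (A : ℝ) (hA : A = ∫ s, a s) (hApos : 0 < A)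
    (g : ℝ → ℝ) (hg : ∀ t, g t = ∫ s in Set.Iic t, a s)
    (hfun : ℝ → ℝ) (hgh : ∀ t, hfun (g t) = t)
    (hhg : ∀ X ∈ Set.Ioo (0 : ℝ) A, g (hfun X) = X)
    (lam : ℝ) (qpot : ℝ → ℂ)
    (hqpot : ∀ X, qpot X =
      Complex.I * ((deriv c (hfun X) : ℝ) : ℂ) / (a (hfun X) : ℂ) ^ 2
      + ((c (hfun X) : ℂ) - (lam : ℂ)) ^ 2 / (a (hfun X) : ℂ) ^ 2
      - Complex.I * ((c (hfun X) : ℂ) - (lam : ℂ)) * ((deriv a (hfun X) : ℝ) : ℂ) / (a (hfun X) : ℂ) ^ 3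
      - (b (hfun X) : ℂ) ^ 2 / (a (hfun X) : ℂ) ^ 2)
    (ωm ωp : ℂ)
    (hωm : ωm = ((cm : ℂ) - lam) ^ 2 / (κm : ℂ) ^ 2 - Complex.I * ((cm : ℂ) - lam) / (κm : ℂ))
    (hωp : ωp = ((cp : ℂ) - lam) ^ 2 / (κp : ℂ) ^ 2 - Complex.I * ((cp : ℂ) - lam) / (κp : ℂ)) :
    (∃ δ > (0 : ℝ), δ ≤ A ∧ ∃ Cb : ℝ, ∀ X ∈ Set.Ioo (0 : ℝ) δ,
      ‖qpot X - ωm / (X : ℂ) ^ 2‖ ≤ Cb) ∧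
    (∃ δ' > (0 : ℝ), δ' ≤ A ∧ ∃ Cb : ℝ, ∀ X ∈ Set.Ioo (A - δ') A,
      ‖qpot X - ωp / ((A : ℂ) - (X : ℂ)) ^ 2‖ ≤ Cb) := by
  obtain rfl : F = horizonFn M Q Λ := funext hF
  obtain rfl : a = angularPotential (horizonFn M Q Λ) rfun := funext ha
  obtain rfl : b = fun s => m * √(horizonFn M Q Λ (rfun s)) := funext hb
  obtain rfl : c = fun s => q * Q / rfun s := funext hc
  obtain rfl : g = fun t => ∫ s in Iic t, angularPotential (horizonFn M Q Λ) rfun s := funext hg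
  subst κn κc κm κp cm cp ωm ωp A
  have hx' : ∀ r ∈ Ioo rm rp, HasDerivAt x (horizonFn M Q Λ r)⁻¹ r := fun r hr =>
    (funext hx : x = reggeWheelerCoord (horizonFn M Q Λ) rn rc rm rp) ▸
      hasDerivAt_reggeWheelerCoord hΛ.ne' hrn hrc hrcm hFn hFc hFm hFp hr
  have hsmooth : ∀ r ∈ Icc rm rp, ContDiffAt ℝ 2 (horizonFn M Q Λ) r := fun r hr =>
    contDiffAt_horizonFn (hrc.trans (hrcm.trans_le hr.1)).ne'
  obtain ⟨⟨δ, hδ, C, hC⟩, ε, hε, D, hD⟩ := exists_forall_Ioo_norm_diracPotential_sub_le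
    (hrc.trans hrcm) hsmooth hFm hFp hκmpos hκpneg hFpos hx' hrmem hrinv haint hhg
    m (q * Q) lam
  refine ⟨⟨δ, hδ.1, hδ.2.le, C, fun X hX => ?_⟩,
    ⟨_, sub_pos.2 hε.2, sub_le_self _ hε.1.le, D, fun X hX => ?_⟩⟩
  · rw [hqpot]
    exact hC X hX
  · rw [hqpot]
    exact hD X (by rwa [sub_sub_cancel] at hX)
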